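/- Let A be a UFD and let P, Q, R ∈ A[x,y,…] be exchange polynomials for three consecutive edges labeled i, j, i of a caterpillar pattern, satisfying: P, Q, R are not divisible by any cluster variable and P, R do not depend on the i-th variable while Q does not depend on the j-th; P and Q₀ := Q|_{xᵢ=0} are coprime; and R|_{xⱼ ← Q₀/xⱼ} = L · Q₀^b · P for some b ≥ 0 and Laurent monomial L whose coefficient is coprime with P. Starting from a cluster (x,y,…) of independent variables, perform exchanges z = P(y)/x, u = Q(z)/y, v = R(u)/z. Then v is a Laurent polynomial over A in the initial cluster, and moreover gcd(z,u) = 1 and gcd(z,v) = 1 in the Laurent polynomial ring. -/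

import Mathlib

/-!
Modulo `z`, the exchanged variable `u` is `Q₀ / xⱼ`, so a common divisor of `z` and `u` divides
both `P` and `Q₀`.

For `v`, keep all variables but `xᵢ` fixed and let `f t` be the value of `R` on the cluster
`xᵢ = t`, `xⱼ = Q(t) / xⱼ`, so that `z * v = f z`. The key condition says `f 0 = m * P = m * xᵢ * z`
with `m` coprime to `P`: hence `z` divides `f z`, and `v` is congruent to `f' 0 + m * xᵢ` modulo
`z`. A divisor of `P` is, up to a Laurent monomial, a polynomial free of `xᵢ`, that is, a constant
for `∂/∂xᵢ`. If it divides `f' 0 + m * xᵢ`, then it divides the derivative `m` of this expression,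
so it is a unit.
-/

open MvPolynomial

section LocalizationDivisibility

variable {R S : Type*} [CommSemiring R] [CommSemiring S] [Algebra R S] [DecompositionMonoid R]
  (M : Submonoid R) [IsLocalization M S]

include M

theorem exists_dvd_dvd_associated_of_algebraMap_dvd {r a : R}
    (h : algebraMap R S r ∣ algebraMap R S a) :
    ∃ r', r' ∣ r ∧ r' ∣ a ∧ Associated (algebraMap R S r) (algebraMap R S r') := by
  obtain ⟨s, hs, hrs⟩ := (IsLocalization.toLocalizationMap M S).map_dvd_map.mp h
  obtain ⟨t, r', hts, hra, rfl⟩ := exists_dvd_and_dvd_of_dvd_mul hrs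
  have ht : IsUnit (algebraMap R S t) :=
    isUnit_of_dvd_unit (map_dvd _ hts) (IsLocalization.map_units S ⟨s, hs⟩)
  exact ⟨r', dvd_mul_left r' t, hra, by
    simpa only [map_mul] using (associated_isUnit_mul_left_iff ht).mpr (Associated.refl _)⟩

theorem exists_dvd_associated_of_dvd_algebraMap {a : R} {d : S} (h : d ∣ algebraMap R S a) :
    ∃ r, r ∣ a ∧ Associated d (algebraMap R S r) := by
  obtain ⟨⟨b, s⟩, hb⟩ := IsLocalization.surj M d
  have hdb : Associated d (algebraMap R S b) :=
    hb ▸ (associated_mul_isUnit_right_iff (IsLocalization.map_units S s)).mpr (Associated.refl d)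
  obtain ⟨r, -, hra, hbr⟩ :=
    exists_dvd_dvd_associated_of_algebraMap_dvd M (hdb.dvd_iff_dvd_left.mp h)
  exact ⟨r, hra, hdb.trans hbr⟩

theorem isRelPrime_algebraMap_of_isLocalization {a b : R} (h : IsRelPrime a b) :
    IsRelPrime (algebraMap R S a) (algebraMap R S b) := by
  intro d hda hdb
  obtain ⟨r, hra, hdr⟩ := exists_dvd_associated_of_dvd_algebraMap M hda
  obtain ⟨r', hr'r, hr'b, hrr'⟩ :=
    exists_dvd_dvd_associated_of_algebraMap_dvd M (hdr.dvd_iff_dvd_left.mp hdb)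
  exact (hdr.trans hrr').isUnit_iff.mpr ((h (hr'r.trans hra) hr'b).map (algebraMap R S))

end LocalizationDivisibility

theorem algebraMap_prod_zpow {B F ι : Type*} [CommSemiring B] [Field F] [Algebra B F] (s : Finset ι)
    (y : ι → Bˣ) (e : ι → ℤ) :
    algebraMap B F ↑(∏ k ∈ s, y k ^ e k) = ∏ k ∈ s, algebraMap B F (y k) ^ e k := by
  calc algebraMap B F ↑(∏ k ∈ s, y k ^ e k)
      = ↑(Units.map (algebraMap B F : B →* F) (∏ k ∈ s, y k ^ e k)) := rfl
    _ = ∏ k ∈ s, algebraMap B F (y k) ^ e k := by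
      simp only [map_prod, map_zpow, Units.coe_prod, Units.val_zpow_eq_zpow_val, Units.coe_map,
        MonoidHom.coe_coe]

theorem exists_algebraMap_eq_mul_prod_zpow_isRelPrime {R S F ι : Type*} [CommSemiring R]
    [CommSemiring S] [Algebra R S] [DecompositionMonoid R] [Field F] [Algebra R F] [Algebra S F]
    [IsScalarTower R S F] (M : Submonoid R) [IsLocalization M S] {p q : R} (hpq : IsRelPrime p q)
    (s : Finset ι) {y : ι → R} (hy : ∀ k, y k ∈ M) (e : ι → ℤ) :
    ∃ m : S, algebraMap S F m = algebraMap R F q * ∏ k ∈ s, algebraMap R F (y k) ^ e k ∧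
      IsRelPrime (algebraMap R S p) m := by
  have hunit (k : ι) : IsUnit (algebraMap R S (y k)) := IsLocalization.map_units S ⟨y k, hy k⟩
  refine ⟨algebraMap R S q * ↑(∏ k ∈ s, (hunit k).unit ^ e k), ?_, ?_⟩
  · simp only [map_mul, algebraMap_prod_zpow, IsUnit.unit_spec, ← IsScalarTower.algebraMap_apply]
  · exact (isRelPrime_mul_unit_right_right (Units.isUnit _)).mpr
      (isRelPrime_algebraMap_of_isLocalization M hpq)

theorem exists_derivation_algebraMap_eq {A R S : Type*} [CommSemiring A] [CommRing R] [CommRing S]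
    [Algebra A R] [Algebra A S] [Algebra R S] [IsScalarTower A R S]
    (M : Submonoid R) [IsLocalization M S] (d : Derivation A R S) :
    ∃ D : Derivation A S S, ∀ r, D (algebraMap R S r) = d r := by
  -- Derivations correspond to lifts of `algebraMap R S` to the dual numbers over `S`, and such a
  -- lift extends to the localization because units of the dual numbers are detected modulo `ε`.
  let f : R →ₐ[A] TrivSqZeroExt S S :=
    { toFun r := TrivSqZeroExt.inl (algebraMap R S r) + TrivSqZeroExt.inr (d r)
      map_one' := by simp
      map_mul' r s := TrivSqZeroExt.ext (by simp)
        (by simp [Algebra.smul_def (R := R) (A := S), mul_comm])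
      map_zero' := by simp
      map_add' r s := TrivSqZeroExt.ext (by simp) (by simp)
      commutes' a := by
        simp [← IsScalarTower.algebraMap_apply, TrivSqZeroExt.algebraMap_eq_inl'] }
  have hf (s : M) : IsUnit (f s) :=
    TrivSqZeroExt.isUnit_iff_isUnit_fst.mpr (by simpa [f] using IsLocalization.map_units S s)
  let g : S →ₐ[A] TrivSqZeroExt S S := IsLocalization.liftAlgHom hf
  have hg (r : R) : g (algebraMap R S r) = f r := IsLocalization.lift_eq hf r
  have hgfst (s : S) : (g s).fst = s :=
    DFunLike.congr_fun (f := (TrivSqZeroExt.fstHom A S S).comp g) (g := AlgHom.id A S)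
      (IsLocalization.algHom_ext M <| AlgHom.ext fun r => by
        change (g (algebraMap R S r)).fst = algebraMap R S r
        simp [hg, f]) s
  let D : Derivation A S S :=
    Derivation.mk' ((TrivSqZeroExt.sndHom S S).restrictScalars A ∘ₗ g.toLinearMap) fun a b => by
      simp [hgfst, mul_comm b]
  exact ⟨D, fun r => by simp [D, hg, f]⟩

section UnivariateExchange

variable {A L : Type*} [CommSemiring A] [CommRing L] [Algebra A L]

theorem isRelPrime_eval_iff_isRelPrime_coeff_zero (z : L) (f : Polynomial L) :
    IsRelPrime z (f.eval z) ↔ IsRelPrime z (f.coeff 0) := by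
  conv_lhs => rw [← f.divX_mul_X_add]
  simp

/-- The constants of a derivation `D`, that is, the elements it annihilates. -/
def constants (D : Derivation A L L) : Subalgebra A L where
  carrier := {a | D a = 0}
  mul_mem' {a b} (ha : D a = 0) (hb : D b = 0) := by simp [ha, hb]
  add_mem' {a b} (ha : D a = 0) (hb : D b = 0) := by simp [ha, hb]
  algebraMap_mem' := D.map_algebraMap

variable {D : Derivation A L L}

@[simp]
theorem mem_constants {a : L} : a ∈ constants D ↔ D a = 0 := Iff.rfl

theorem mem_constants_of_mul_mem [NoZeroDivisors L] {a b : L} (hb : b ∈ constants D) (hb₀ : b ≠ 0)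
    (hab : a * b ∈ constants D) : a ∈ constants D := by
  simpa [mem_constants.mp hb, hb₀] using hab

theorem dvd_derivation_apply {c a : L} (hc : c ∈ constants D) (h : c ∣ a) : c ∣ D a := by
  obtain ⟨b, rfl⟩ := h
  simp [mem_constants.mp hc]

theorem isRelPrime_add_mul_of_mem_constants {p g m x : L}
    (hp : ∀ d, d ∣ p → ∃ c ∈ constants D, Associated d c)
    (hg : g ∈ constants D) (hm : m ∈ constants D) (hx : D x = 1) (hpm : IsRelPrime p m) :
    IsRelPrime p (g + m * x) := by
  intro d hdp hd
  obtain ⟨c, hc, hdc⟩ := hp d hdp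
  have hcm : c ∣ D (g + m * x) := dvd_derivation_apply hc (hdc.dvd_iff_dvd_left.mp hd)
  rw [map_add, D.leibniz, mem_constants.mp hg, mem_constants.mp hm, hx] at hcm
  exact hpm hdp (hdc.dvd_iff_dvd_left.mpr (by simpa using hcm))

theorem exists_mul_eq_eval_isRelPrime [NoZeroDivisors L] {p m x z : L} {f : Polynomial L}
    (hp₀ : p ≠ 0) (hpD : p ∈ constants D) (hp : ∀ d, d ∣ p → ∃ c ∈ constants D, Associated d c)
    (hx : D x = 1) (hz : x * z = p) (hf : ∀ k, f.coeff k ∈ constants D)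
    (hf₀ : f.coeff 0 = m * p) (hpm : IsRelPrime p m) :
    ∃ v, z * v = f.eval z ∧ IsRelPrime z v := by
  have hm : m ∈ constants D := mem_constants_of_mul_mem hpD hp₀ (hf₀ ▸ hf 0)
  let g : Polynomial L := f.divX + Polynomial.C (m * x)
  refine ⟨g.eval z, ?_, (isRelPrime_eval_iff_isRelPrime_coeff_zero z g).mpr ?_⟩
  · rw [← f.divX_mul_X_add, hf₀, ← hz]
    simp only [g, Polynomial.eval_add, Polynomial.eval_mul, Polynomial.eval_C, Polynomial.eval_X]
    ring
  · have hpg : IsRelPrime p (g.coeff 0) := by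
      simpa [g] using isRelPrime_add_mul_of_mem_constants hp (hf 1) hm hx hpm
    exact fun d hdz => hpg (hz ▸ hdz.mul_left x)

theorem coeff_aeval_mem {σ : Type*} (S : Subalgebra A L) {g : σ → Polynomial L}
    (hg : ∀ k l, (g k).coeff l ∈ S) (R : MvPolynomial σ A) (l : ℕ) : (aeval g R).coeff l ∈ S := by
  have hlift (k : σ) : ∃ h, Polynomial.mapAlgHom S.val h = g k :=
    (Polynomial.mem_lifts _).mp <|
      (Polynomial.lifts_iff_coeff_lifts _).mpr fun l => ⟨⟨_, hg k l⟩, rfl⟩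
  choose h hh using hlift
  rw [← funext hh, ← comp_aeval_apply]
  simp

theorem eval_aeval {σ : Type*} (z : L) (g : σ → Polynomial L) (R : MvPolynomial σ A) :
    (aeval g R).eval z = aeval (fun k => (g k).eval z) R := by
  simpa using comp_aeval_apply g ((Polynomial.aeval z).restrictScalars A) R

end UnivariateExchange

section FormalCluster

variable {A L σ : Type*} [CommSemiring A] [CommRing L] [Algebra A L] [DecidableEq σ]

/-- The cluster `x` with its `i`-th variable turned into an indeterminate, the other variables
being scalars. -/
noncomputable def formalCluster (x : σ → L) (i : σ) : σ → Polynomial L :=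
  Function.update (fun k => Polynomial.C (x k)) i Polynomial.X

/-- The formal cluster with its `j`-th variable exchanged along the polynomial `Q`. The scalar `y`
stands for the inverse of the variable `x j`. -/
noncomputable def formalExchange (x : σ → L) (i j : σ) (y : L) (Q : MvPolynomial σ A) :
    σ → Polynomial L :=
  Function.update (formalCluster x i) j (Polynomial.C y * aeval (formalCluster x i) Q)

theorem aeval_update_of_notMem_vars {R : MvPolynomial σ A} {i : σ} (hi : i ∉ R.vars) (x : σ → L)
    (t : L) : aeval (Function.update x i t) R = aeval x R := by
  refine eval₂Hom_congr' rfl (fun k hk _ => ?_) rfl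
  exact Function.update_of_ne (ne_of_mem_of_not_mem hk hi) _ _

theorem coeff_formalCluster_mem {S : Subalgebra A L} {x : σ → L} {i : σ}
    (hx : ∀ k ≠ i, x k ∈ S) (k : σ) (l : ℕ) : (formalCluster x i k).coeff l ∈ S := by
  rcases eq_or_ne k i with rfl | hk
  · simp only [formalCluster, Function.update_self, Polynomial.coeff_X]
    split_ifs <;> simp
  · simp only [formalCluster, Function.update_of_ne hk, Polynomial.coeff_C]
    split_ifs <;> simp [hx k hk]

theorem coeff_formalExchange_mem {S : Subalgebra A L} {x : σ → L} {i j : σ} {y : L}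
    (hx : ∀ k ≠ i, x k ∈ S) (hy : y ∈ S) (Q : MvPolynomial σ A) (k : σ) (l : ℕ) :
    (formalExchange x i j y Q k).coeff l ∈ S := by
  rcases eq_or_ne k j with rfl | hk
  · simpa [formalExchange] using S.mul_mem hy (coeff_aeval_mem S (coeff_formalCluster_mem hx) Q l)
  · simpa [formalExchange, hk] using coeff_formalCluster_mem hx k l

theorem eval_formalCluster (x : σ → L) (i : σ) (t : L) :
    (fun k => (formalCluster x i k).eval t) = Function.update x i t := by
  funext k
  rcases eq_or_ne k i with rfl | hk <;> simp [formalCluster, *]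

theorem isRelPrime_aeval_update_iff (x : σ → L) (i : σ) (z : L) (Q : MvPolynomial σ A) :
    IsRelPrime z (aeval (Function.update x i z) Q) ↔
      IsRelPrime z (aeval (Function.update x i 0) Q) := by
  simpa [Polynomial.coeff_zero_eq_eval_zero, eval_aeval, eval_formalCluster] using
    isRelPrime_eval_iff_isRelPrime_coeff_zero z (aeval (formalCluster x i) Q)

theorem eval_formalExchange (x : σ → L) (i j : σ) (y t : L) (Q : MvPolynomial σ A) :
    (fun k => (formalExchange x i j y Q k).eval t) =
      Function.update (Function.update x i t) j (y * aeval (Function.update x i t) Q) := by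
  funext k
  rcases eq_or_ne k j with rfl | hk
  · simp [formalExchange, eval_aeval, eval_formalCluster]
  · simpa [formalExchange, hk] using congrFun (eval_formalCluster x i t) k

end FormalCluster

section ThreeStep

variable {A σ : Type*} [CommRing A]

theorem notMem_vars_of_dvd [IsDomain A] {P p : MvPolynomial σ A} {i : σ} (hP : P ≠ 0)
    (hi : i ∉ P.vars) (hp : p ∣ P) : i ∉ p.vars := by
  obtain ⟨q, rfl⟩ := hp
  rw [mem_vars_iff_degreeOf_ne_zero, not_not] at hi ⊢
  rw [degreeOf_mul_eq (left_ne_zero_of_mul hP) (right_ne_zero_of_mul hP)] at hi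
  exact Nat.eq_zero_of_add_eq_zero_right hi

variable {L : Type*} [CommRing L] [Algebra A L] [Algebra (MvPolynomial σ A) L]
  (M : Submonoid (MvPolynomial σ A)) [IsLocalization M L]

include M in
theorem exists_mem_constants_associated_of_dvd_algebraMap [IsDomain A]
    [DecompositionMonoid (MvPolynomial σ A)] {D : Derivation A L L} {i : σ}
    (hD : ∀ p : MvPolynomial σ A, i ∉ p.vars → algebraMap _ L p ∈ constants D)
    {P : MvPolynomial σ A} (hP : P ≠ 0) (hi : i ∉ P.vars) {d : L}
    (hd : d ∣ algebraMap (MvPolynomial σ A) L P) : ∃ c ∈ constants D, Associated d c := by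
  obtain ⟨p, hpP, hdp⟩ := exists_dvd_associated_of_dvd_algebraMap M hd
  exact ⟨_, hD p (notMem_vars_of_dvd hP hi hpP), hdp⟩

variable [IsScalarTower A (MvPolynomial σ A) L]

include M in
theorem exists_derivation_apply_X_eq_one (i : σ) :
    ∃ D : Derivation A L L, D (algebraMap (MvPolynomial σ A) L (X i)) = 1 ∧
      ∀ p : MvPolynomial σ A, i ∉ p.vars → algebraMap _ L p ∈ constants D := by
  classical
  obtain ⟨D, hD⟩ := exists_derivation_algebraMap_eq M (mkDerivation A (Pi.single i (1 : L)))
  refine ⟨D, by simp [hD], fun p hp => ?_⟩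
  rw [mem_constants, hD]
  refine derivation_eqOn_supported (D₂ := 0) (s := {i}ᶜ) (fun k hk => ?_)
    (mem_supported.mpr (by simpa using hp))
  simpa using Pi.single_eq_of_ne hk 1

variable {x : σ → L} (hx : ∀ k, x k = algebraMap (MvPolynomial σ A) L (X k))

include hx

theorem aeval_eq_algebraMap (p : MvPolynomial σ A) : aeval x p = algebraMap _ L p := by
  obtain rfl : x = algebraMap _ L ∘ X := funext hx
  rw [aeval_algebraMap_apply, aeval_X_left_apply]

variable [DecidableEq σ]

theorem algebraMap_aeval_update_zero (i : σ) (Q : MvPolynomial σ A) :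
    algebraMap (MvPolynomial σ A) L (aeval (Function.update X i 0) Q) =
      aeval (Function.update x i 0) Q := by
  obtain rfl : x = algebraMap _ L ∘ X := funext hx
  rw [← aeval_algebraMap_apply, Function.comp_update, map_zero]

variable {i j : σ} {P Q R : MvPolynomial σ A} {z : L}

include M

theorem isRelPrime_of_two_exchanges [DecompositionMonoid (MvPolynomial σ A)]
    (hPQ : IsRelPrime P (aeval (Function.update X i 0) Q)) {u : L} (hz : x i * z = aeval x P)
    (hu : x j * u = aeval (Function.update x i z) Q) : IsRelPrime z u := by
  have hPQ' := isRelPrime_algebraMap_of_isLocalization (S := L) M hPQ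
  rw [← aeval_eq_algebraMap hx, ← hz, algebraMap_aeval_update_zero hx] at hPQ'
  have hzQ := (isRelPrime_aeval_update_iff x i z Q).mpr hPQ'.of_mul_left_right
  exact (hu ▸ hzQ).of_mul_right_right

theorem exists_third_exchange_isRelPrime [IsDomain A] [DecompositionMonoid (MvPolynomial σ A)]
    (hM : M ≤ nonZeroDivisors (MvPolynomial σ A)) (hij : i ≠ j) (hxj : IsUnit (x j)) (hP : P ≠ 0)
    (hPi : i ∉ P.vars) (hRi : i ∉ R.vars) {u w m : L} (hz : x i * z = aeval x P)
    (hu : x j * u = aeval (Function.update x i z) Q)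
    (hw : x j * w = aeval (Function.update x i 0) Q)
    (hR : aeval (Function.update x j w) R = m * aeval x P) (hPm : IsRelPrime (aeval x P) m) :
    ∃ v, z * v = aeval (Function.update (Function.update x i z) j u) R ∧ IsRelPrime z v := by
  have : IsDomain L := IsLocalization.isDomain_of_le_nonZeroDivisors _ hM
  obtain ⟨D, hDi, hD⟩ := exists_derivation_apply_X_eq_one (L := L) M i
  have hxD (k : σ) (hk : k ≠ i) : x k ∈ constants D := hx k ▸ hD _ (by simpa using hk.symm)
  obtain ⟨y, hy⟩ := hxj.exists_left_inv
  have hyD : y ∈ constants D :=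
    mem_constants_of_mul_mem (hxD j hij.symm) hxj.ne_zero (hy ▸ one_mem _)
  have hcancel (a : L) : y * (x j * a) = a := by rw [← mul_assoc, hy, one_mul]
  rw [aeval_eq_algebraMap hx] at hz hR hPm
  have hR₀ : (aeval (formalExchange x i j y Q) R).coeff 0 = m * algebraMap _ L P := by
    rw [Polynomial.coeff_zero_eq_eval_zero, eval_aeval, eval_formalExchange, ← hw, hcancel,
      Function.update_comm hij, aeval_update_of_notMem_vars hRi, hR]
  have hRz : (aeval (formalExchange x i j y Q) R).eval z =
      aeval (Function.update (Function.update x i z) j u) R := by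
    rw [eval_aeval, eval_formalExchange, ← hu, hcancel]
  rw [← hRz]
  exact exists_mul_eq_eval_isRelPrime
    ((map_ne_zero_iff _ (IsLocalization.injective L hM)).mpr hP) (hD P hPi)
    (fun _ => exists_mem_constants_associated_of_dvd_algebraMap M hD hP hPi) (hx i ▸ hDi) hz
    (coeff_aeval_mem _ (coeff_formalExchange_mem hxD hyD Q) R) hR₀ hPm

end ThreeStep

section FieldExchanges

variable {A σ : Type*} [CommRing A] {L : Type*} [CommRing L] [Algebra A L]
  {F : Type*} [Field F] [Algebra A F] [Algebra L F] [IsScalarTower A L F]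

theorem aeval_div_eq_algebraMap {a b : L} {g : σ → L} {p : MvPolynomial σ A}
    (ha : IsUnit (algebraMap L F a)) (h : a * b = aeval g p) :
    aeval (algebraMap L F ∘ g) p / algebraMap L F a = algebraMap L F b := by
  rw [aeval_algebraMap_apply, ← h, map_mul, mul_div_cancel_left₀ _ ha.ne_zero]

variable [DecidableEq σ] [Algebra (MvPolynomial σ A) L]
  [IsScalarTower A (MvPolynomial σ A) L] (M : Submonoid (MvPolynomial σ A)) [IsLocalization M L]
  [FaithfulSMul L F]

include M in
theorem exists_lift_exchanges_isRelPrime [IsDomain A] [DecompositionMonoid (MvPolynomial σ A)]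
    (hM : M ≤ nonZeroDivisors (MvPolynomial σ A)) {x : σ → L}
    (hx : ∀ k, x k = algebraMap (MvPolynomial σ A) L (X k)) {i j : σ} (hij : i ≠ j)
    (hxi : IsUnit (x i)) (hxj : IsUnit (x j)) {P Q R Q₀ : MvPolynomial σ A} (hP : P ≠ 0)
    (hPi : i ∉ P.vars) (hRi : i ∉ R.vars) (hQ₀ : Q₀ = aeval (Function.update X i 0) Q)
    (hPQ₀ : IsRelPrime P Q₀) {m : L} {x' : σ → F} (hx' : x' = algebraMap L F ∘ x)
    (hR : aeval (Function.update x' j (aeval x' Q₀ / x' j)) R = algebraMap L F m * aeval x' P)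
    (hPm : IsRelPrime (aeval x P) m) {z u v : F} (hz : z = aeval x' P / x' i)
    (hu : u = aeval (Function.update x' i z) Q / x' j)
    (hv : v = aeval (Function.update (Function.update x' i z) j u) R / z) :
    ∃ z' u' v' : L, algebraMap L F z' = z ∧ algebraMap L F u' = u ∧ algebraMap L F v' = v ∧
      IsRelPrime z' u' ∧ IsRelPrime z' v' := by
  subst hx'
  have hL : Function.Injective (algebraMap L F) := FaithfulSMul.algebraMap_injective L F
  obtain ⟨z', hz'⟩ := hxi.dvd (a := aeval x P)
  obtain rfl : z = algebraMap L F z' :=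
    hz.trans (aeval_div_eq_algebraMap (hxi.map _) hz'.symm)
  obtain ⟨u', hu'⟩ := hxj.dvd (a := aeval (Function.update x i z') Q)
  rw [← Function.comp_update] at hu hv
  obtain rfl : u = algebraMap L F u' :=
    hu.trans (aeval_div_eq_algebraMap (hxj.map _) hu'.symm)
  obtain ⟨w, hw⟩ := hxj.dvd (a := aeval x Q₀)
  rw [Function.comp_apply, aeval_div_eq_algebraMap (hxj.map _) hw.symm, ← Function.comp_update,
    aeval_algebraMap_apply, aeval_algebraMap_apply, ← map_mul] at hR
  rw [aeval_eq_algebraMap hx, hQ₀, algebraMap_aeval_update_zero hx] at hw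
  obtain ⟨v', hv', hzv⟩ := exists_third_exchange_isRelPrime M hx hM hij hxj hP hPi hRi
    hz'.symm hu'.symm hw.symm (hL hR) hPm
  have hz₀ : z' ≠ 0 := by
    rintro rfl
    rw [mul_zero, aeval_eq_algebraMap hx] at hz'
    exact hP (IsLocalization.injective L hM (hz'.trans (map_zero _).symm))
  rw [← Function.comp_update] at hv
  exact ⟨z', u', v', rfl, rfl,
    (hv.trans (aeval_div_eq_algebraMap ((map_ne_zero_iff _ hL).mpr hz₀).isUnit hv')).symm,
    isRelPrime_of_two_exchanges M hx (hQ₀ ▸ hPQ₀) hz'.symm hu'.symm, hzv⟩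

end FieldExchanges

section LaurentSubalgebra

/-- The multiplicative submonoid of monomials, at which localizing the polynomial ring gives the
ring of Laurent polynomials. -/
noncomputable def monomialSubmonoid (σ A : Type*) [CommSemiring A] : Submonoid (MvPolynomial σ A) :=
  Submonoid.closure (Set.range X)

theorem X_mem_monomialSubmonoid {A σ : Type*} [CommSemiring A] (k : σ) :
    X k ∈ monomialSubmonoid σ A :=
  Submonoid.subset_closure ⟨k, rfl⟩

variable {A σ : Type*} [CommRing A] [IsDomain A]

theorem monomialSubmonoid_le_nonZeroDivisors :
    monomialSubmonoid σ A ≤ nonZeroDivisors (MvPolynomial σ A) :=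
  Submonoid.closure_le.mpr <| Set.range_subset_iff.mpr fun k =>
    mem_nonZeroDivisors_of_ne_zero (X_ne_zero k)

variable (F : Type*) [Field F] [Algebra (MvPolynomial σ A) F]
  [IsFractionRing (MvPolynomial σ A) F]

/-- The ring of Laurent polynomials over `A` in the variables indexed by `σ`, as a subalgebra of
the field of rational functions `F`. -/
noncomputable abbrev laurentSubalgebra : Subalgebra (MvPolynomial σ A) F :=
  Localization.subalgebra.ofField F (monomialSubmonoid σ A) monomialSubmonoid_le_nonZeroDivisors

theorem closure_eq_laurentSubalgebra {φ : A →+* F}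
    (hφ : φ = (algebraMap (MvPolynomial σ A) F).comp C) {x : σ → F}
    (hx : ∀ k, x k = algebraMap (MvPolynomial σ A) F (X k)) :
    Subring.closure (Set.range φ ∪ Set.range x ∪ Set.range (fun k => (x k)⁻¹)) =
      (laurentSubalgebra F (A := A) (σ := σ)).toSubring := by
  obtain rfl : x = fun k => algebraMap (MvPolynomial σ A) F (X k) := funext hx
  set K := Subring.closure (Set.range φ ∪ Set.range _ ∪ _)
  have hKC (a : A) : φ a ∈ K := Subring.subset_closure (.inl (.inl ⟨a, rfl⟩))
  have hKX (k : σ) : algebraMap (MvPolynomial σ A) F (X k) ∈ K :=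
    Subring.subset_closure (.inl (.inr ⟨k, rfl⟩))
  have hKXinv (k : σ) : (algebraMap (MvPolynomial σ A) F (X k))⁻¹ ∈ K :=
    Subring.subset_closure (.inr ⟨k, rfl⟩)
  refine le_antisymm (Subring.closure_le.mpr ?_) ?_
  · rintro _ ((⟨a, rfl⟩ | ⟨k, rfl⟩) | ⟨k, rfl⟩)
    · exact hφ ▸ (laurentSubalgebra F).algebraMap_mem (C a)
    · exact (laurentSubalgebra F).algebraMap_mem (X k)
    · exact ⟨1, X k, X_mem_monomialSubmonoid k, by simp⟩
  · rintro _ ⟨p, s, hs, rfl⟩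
    refine K.mul_mem ?_ ?_
    · induction p using MvPolynomial.induction_on with
      | C a => exact RingHom.congr_fun hφ a ▸ hKC a
      | add p q hp hq => exact map_add (algebraMap _ F) p q ▸ K.add_mem hp hq
      | mul_X p k hp => exact map_mul (algebraMap _ F) p _ ▸ K.mul_mem hp (hKX k)
    · induction hs using Submonoid.closure_induction with
      | mem _ hs => obtain ⟨k, rfl⟩ := hs; exact hKXinv k
      | one => simp
      | mul s t _ _ hs ht => rw [map_mul, mul_inv]; exact K.mul_mem hs ht

end LaurentSubalgebra

theorem exists_mul_eq_one_of_isRelPrime {F : Type*} [CommRing F] {L : Subring F} {a b : L}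
    (h : IsRelPrime a b) {d : F} (hd : d ∈ L) (ha : ∃ e ∈ L, (a : F) = d * e)
    (hb : ∃ e ∈ L, (b : F) = d * e) : ∃ e ∈ L, d * e = 1 := by
  obtain ⟨e, he, hae⟩ := ha
  obtain ⟨f, hf, hbf⟩ := hb
  obtain ⟨g, hg⟩ := (h (d := ⟨d, hd⟩) ⟨⟨e, he⟩, Subtype.ext hae⟩
    ⟨⟨f, hf⟩, Subtype.ext hbf⟩).exists_right_inv
  exact ⟨g, g.2, congrArg Subtype.val hg⟩

theorem caterpillar_three_step_lemma_general {A : Type*} [CommRing A] [IsDomain A] {σ : Type*}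
    [DecidableEq σ] [DecompositionMonoid (MvPolynomial σ A)] {i j : σ} (hij : i ≠ j)
    {F : Type*} [Field F] [Algebra (MvPolynomial σ A) F] [IsFractionRing (MvPolynomial σ A) F]
    (φ : A →+* F) (hφ : φ = (algebraMap (MvPolynomial σ A) F).comp C)
    (x : σ → F) (hx : ∀ k, x k = algebraMap (MvPolynomial σ A) F (X k))
    {P Q R Q₀ : MvPolynomial σ A} (hP : P ≠ 0) (hPi : i ∉ P.vars) (hRi : i ∉ R.vars)
    (hQ₀ : Q₀ = aeval (fun k => if k = i then 0 else X k) Q) (hPQ₀ : IsRelPrime P Q₀)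
    (hR : ∃ (b : ℕ) (c : A) (s : Finset σ) (e : σ → ℤ), IsRelPrime (C c) P ∧
      eval₂ φ (Function.update x j (eval₂ φ x Q₀ / x j)) R =
        (φ c * ∏ k ∈ s, x k ^ e k) * eval₂ φ x Q₀ ^ b * eval₂ φ x P)
    {z u v : F} (hz : z = eval₂ φ x P / x i) (hu : u = eval₂ φ (Function.update x i z) Q / x j)
    (hv : v = eval₂ φ (Function.update (Function.update x i z) j u) R / z)
    {L₀ : Subring F} (hL₀ : L₀ = Subring.closure
      (Set.range φ ∪ Set.range x ∪ Set.range (fun k => (x k)⁻¹))) :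
    z ∈ L₀ ∧ u ∈ L₀ ∧ v ∈ L₀ ∧
    (∀ d ∈ L₀, (∃ e ∈ L₀, z = d * e) → (∃ e ∈ L₀, u = d * e) → ∃ e ∈ L₀, d * e = 1) ∧
    (∀ d ∈ L₀, (∃ e ∈ L₀, z = d * e) → (∃ e ∈ L₀, v = d * e) → ∃ e ∈ L₀, d * e = 1) := by
  obtain ⟨b, c, s, e, hcP, hR⟩ := hR
  obtain rfl := hL₀.trans (closure_eq_laurentSubalgebra F hφ hx)
  replace hQ₀ : Q₀ = aeval (Function.update X i 0) Q :=
    hQ₀.trans (congrArg (aeval · Q) (funext fun k => (Function.update_apply _ _ _ k).symm))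
  let _ := φ.toAlgebra
  have : IsScalarTower A (MvPolynomial σ A) F := .of_algebraMap_eq' hφ
  let L : Subalgebra (MvPolynomial σ A) F := laurentSubalgebra F
  have hxL : x = algebraMap L F ∘ fun k => algebraMap (MvPolynomial σ A) L (X k) := funext hx
  obtain ⟨m, hm, hPm⟩ := exists_algebraMap_eq_mul_prod_zpow_isRelPrime (F := F) (S := L)
    (monomialSubmonoid σ A) (hcP.symm.mul_right (hPQ₀.pow_right (n := b))) s
    X_mem_monomialSubmonoid e
  have hmR : algebraMap L F m = (φ c * ∏ k ∈ s, x k ^ e k) * aeval x Q₀ ^ b := by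
    rw [hm, map_mul, map_pow, ← aeval_eq_algebraMap hx Q₀, ← algebraMap_eq,
      ← IsScalarTower.algebraMap_apply A, mul_right_comm]
    simp only [hx, RingHom.algebraMap_toAlgebra]
  obtain ⟨z', u', v', rfl, rfl, rfl, hzu, hzv⟩ :=
    exists_lift_exchanges_isRelPrime (L := L) (monomialSubmonoid σ A)
      monomialSubmonoid_le_nonZeroDivisors (fun _ => rfl) hij
      (IsLocalization.map_units _ ⟨X i, X_mem_monomialSubmonoid i⟩)
      (IsLocalization.map_units _ ⟨X j, X_mem_monomialSubmonoid j⟩) hP hPi hRi hQ₀ hPQ₀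
      hxL (hmR ▸ hR) (by rwa [aeval_eq_algebraMap fun _ => rfl]) hz hu hv
  exact ⟨z'.2, u'.2, v'.2, fun d hd => exists_mul_eq_one_of_isRelPrime hzu hd,
    fun d hd => exists_mul_eq_one_of_isRelPrime hzv hd⟩

/-- The three-step lemma (Lemma 2.2 of Fomin–Zelevinsky, "The Laurent
phenomenon"): for three consecutive exchanges along edges labeled i, j, i of a
caterpillar pattern, with exchange polynomials P, Q, R over a UFD A satisfying
the caterpillar conditions, the new variables z = P/xᵢ, u = Q(z)/xⱼ,
v = R(u)/z are Laurent polynomials over A in the initial cluster, and moreover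
gcd(z,u) = 1 and gcd(z,v) = 1 in the Laurent polynomial ring L₀. -/
theorem caterpillar_three_step_lemma
    (A : Type*) [CommRing A] [IsDomain A] [UniqueFactorizationMonoid A]
    (n : ℕ) (i j : Fin n) (hij : i ≠ j)
    (F : Type*) [Field F] [Algebra (MvPolynomial (Fin n) A) F]
    [IsFractionRing (MvPolynomial (Fin n) A) F]
    (φ : A →+* F)
    (hφ : φ = (algebraMap (MvPolynomial (Fin n) A) F).comp
      (C : A →+* MvPolynomial (Fin n) A))
    (x : Fin n → F) (hx : ∀ k, x k = algebraMap (MvPolynomial (Fin n) A) F (X k))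
    (P Q R : MvPolynomial (Fin n) A)
    (hPne : P ≠ 0) (hQne : Q ≠ 0) (hRne : R ≠ 0)
    -- none of P, Q, R is divisible by any cluster variable
    (hPdiv : ∀ k, ¬ (X k ∣ P)) (hQdiv : ∀ k, ¬ (X k ∣ Q)) (hRdiv : ∀ k, ¬ (X k ∣ R))
    -- P and R do not depend on the i-th variable; Q does not depend on the j-th
    (hPdep : i ∉ P.vars) (hRdep : i ∉ R.vars) (hQdep : j ∉ Q.vars)
    -- Q₀ = Q|_{xᵢ = 0}
    (Q₀ : MvPolynomial (Fin n) A)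
    (hQ₀ : Q₀ = aeval (fun k => if k = i then 0 else X k) Q)
    -- P and Q₀ are coprime
    (hcop : ∀ d : MvPolynomial (Fin n) A, d ∣ P → d ∣ Q₀ → IsUnit d)
    -- key condition: R|_{xⱼ ← Q₀/xⱼ} = L · Q₀^b · P, coefficient of L coprime to P
    (hkey : ∃ (b : ℕ) (cL : A) (eL : Fin n → ℤ),
      (∀ d : MvPolynomial (Fin n) A, d ∣ C cL → d ∣ P → IsUnit d) ∧
      eval₂ φ (Function.update x j (eval₂ φ x Q₀ / x j)) R
        = (φ cL * ∏ k, x k ^ eL k) * (eval₂ φ x Q₀) ^ b * eval₂ φ x P)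
    -- the three exchanges
    (z u v : F)
    (hz : z = eval₂ φ x P / x i)
    (hu : u = eval₂ φ (Function.update x i z) Q / x j)
    (hv : v = eval₂ φ (Function.update (Function.update x i z) j u) R / z)
    -- the Laurent polynomial ring of the initial cluster
    (L₀ : Subring F)
    (hL₀ : L₀ = Subring.closure
      (Set.range φ ∪ Set.range x ∪ Set.range (fun k => (x k)⁻¹))) :
    z ∈ L₀ ∧ u ∈ L₀ ∧ v ∈ L₀ ∧
    (∀ d ∈ L₀, (∃ e ∈ L₀, z = d * e) → (∃ e ∈ L₀, u = d * e) →
      ∃ e ∈ L₀, d * e = 1) ∧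
    (∀ d ∈ L₀, (∃ e ∈ L₀, z = d * e) → (∃ e ∈ L₀, v = d * e) →
      ∃ e ∈ L₀, d * e = 1) := by
  obtain ⟨b, c, e, hc, hR⟩ := hkey
  exact caterpillar_three_step_lemma_general hij φ hφ x hx hPne hPdep hRdep hQ₀ hcop
    ⟨b, c, Finset.univ, e, hc, hR⟩ hz hu hv hL₀
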